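/- Let m,n,k be positive integers. There exist matrices A_1,…,A_k ∈ ℂ^{n×m} with ∑_{i=1}^k A_i^* A_i = I_m if and only if k·min(m,n) ≥ m. Consequently, the set L_{m,n,k} of quantum channels L from m×m to n×n matrices with rank Z(L) ≤ k is nonempty if and only if k·min(m,n) ≥ m. -/

import Mathlib

/-!
If `∑ i, (A i)ᴴ * A i = 1`, then no nonzero vector is killed by all the `A i`. Evaluation
`x ↦ (T ↦ T *ᵥ x)` therefore embeds `ℂᵐ` into `W →ₗ ℂⁿ`, where `W` is the span of the `A i`, so
`m ≤ dim W * n`. The dimension of `W` is at most the number of the `A i`, and it is exactly the rank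
of the Choi matrix, which factors as `K * Kᴴ` with the vectorized `A i` as the columns of `K`. This
settles the necessity in both claims. Conversely, if `m ≤ k * n`, an injection of index sets gives
an isometry `ℂᵐ → ℂᵏ ⊗ ℂⁿ`, and its `k` row blocks are the required matrices.
-/

open Matrix
open scoped ComplexOrder

/-- The Choi matrix of a linear map `L` from `m × m` to `n × n` complex matrices:
its `((i,p),(j,q))` entry is the `(p,q)` entry of `L(E_{ij})`. -/
def choi (m n : ℕ) (L : Matrix (Fin m) (Fin m) ℂ →ₗ[ℂ] Matrix (Fin n) (Fin n) ℂ) :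
    Matrix (Fin m × Fin n) (Fin m × Fin n) ℂ :=
  Matrix.of fun ip jq => L (Matrix.single ip.1 jq.1 (1 : ℂ)) ip.2 jq.2

/-- `L` is a quantum channel: it admits a Kraus representation
`L(X) = ∑ Aᵢ X Aᵢ*` with `∑ Aᵢ* Aᵢ = I`. -/
def IsChannel (m n : ℕ) (L : Matrix (Fin m) (Fin m) ℂ →ₗ[ℂ] Matrix (Fin n) (Fin n) ℂ) : Prop :=
  ∃ (k : ℕ) (A : Fin k → Matrix (Fin n) (Fin m) ℂ),
    (∀ X, L X = ∑ i, A i * X * (A i)ᴴ) ∧ ∑ i, (A i)ᴴ * A i = 1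

/-- `L` is an extreme point of the convex set of quantum channels. -/
def IsExtremeChannel (m n : ℕ)
    (L : Matrix (Fin m) (Fin m) ℂ →ₗ[ℂ] Matrix (Fin n) (Fin n) ℂ) : Prop :=
  IsChannel m n L ∧
    ∀ L₁ L₂ : Matrix (Fin m) (Fin m) ℂ →ₗ[ℂ] Matrix (Fin n) (Fin n) ℂ,
      IsChannel m n L₁ → IsChannel m n L₂ → ∀ t : ℝ, 0 < t → t < 1 →
      L = (t : ℂ) • L₁ + ((1 - t : ℝ) : ℂ) • L₂ → L₁ = L ∧ L₂ = L

open Module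

section SeparatingRight

variable {R V W U : Type*} [CommRing R] [StrongRankCondition R] [AddCommGroup V] [Module R V]
  [AddCommGroup W] [Module R W] [Module.Free R W] [Module.Finite R W]
  [AddCommGroup U] [Module R U] [Module.Free R U] [Module.Finite R U]

theorem finrank_le_finrank_mul_finrank_of_separatingRight {B : W →ₗ[R] V →ₗ[R] U}
    (hB : B.SeparatingRight) : finrank R V ≤ finrank R W * finrank R U := by
  have hinj : Function.Injective B.flip :=
    LinearMap.ker_eq_bot.mp (LinearMap.separatingRight_iff_flip_ker_eq_bot.mp hB)
  exact (LinearMap.finrank_le_finrank_of_injective hinj).trans_eq (finrank_linearMap R R W U)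

end SeparatingRight

section KrausOperators

variable {ι m n : Type*}

theorem card_le_finrank_range_mul_card {K : Type*} [Field K] [Fintype m] [Fintype n]
    {A : ι → Matrix n m K} (hA : ∀ x, (∀ i, A i *ᵥ x = 0) → x = 0) :
    Fintype.card m ≤ (Set.range A).finrank K * Fintype.card n := by
  let B := mulVecBilin K K ∘ₗ (Submodule.span K (Set.range A)).subtype
  have hB : B.SeparatingRight := fun x hx ↦
    hA x fun i ↦ hx ⟨A i, Submodule.subset_span (Set.mem_range_self i)⟩
  simpa [Set.finrank] using finrank_le_finrank_mul_finrank_of_separatingRight hB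

theorem eq_zero_of_sum_conjTranspose_mul_self_eq_one {R : Type*} [Semiring R] [Star R]
    [Fintype ι] [Fintype m] [Fintype n] [DecidableEq m] {A : ι → Matrix n m R}
    (hA : ∑ i, (A i)ᴴ * A i = 1) {x : m → R} (hx : ∀ i, A i *ᵥ x = 0) : x = 0 := by
  rw [← one_mulVec x, ← hA, sum_mulVec]
  simp only [← mulVec_mulVec, hx, mulVec_zero, Finset.sum_const_zero]

theorem card_le_finrank_range_mul_card_of_sum_eq_one {K : Type*} [Field K] [Star K]
    [Fintype ι] [Fintype m] [Fintype n] [DecidableEq m] {A : ι → Matrix n m K}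
    (hA : ∑ i, (A i)ᴴ * A i = 1) :
    Fintype.card m ≤ (Set.range A).finrank K * Fintype.card n :=
  card_le_finrank_range_mul_card fun _ ↦ eq_zero_of_sum_conjTranspose_mul_self_eq_one hA

theorem sum_conjTranspose_mul_self_submatrix_prodMk {R : Type*}
    [NonUnitalNonAssocSemiring R] [Star R] [Fintype ι] [Fintype n] (V : Matrix (ι × n) m R) :
    ∑ i, (V.submatrix (Prod.mk i) id)ᴴ * V.submatrix (Prod.mk i) id = Vᴴ * V := by
  ext a b
  simp only [Matrix.sum_apply, mul_apply, conjTranspose_apply, submatrix_apply, id_eq,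
    Fintype.sum_prod_type]

theorem conjTranspose_mul_self_submatrix_one {R p : Type*} [Semiring R] [StarRing R] [Fintype p]
    [DecidableEq m] [DecidableEq p] (e : m ↪ p) :
    ((1 : Matrix p p R).submatrix id e)ᴴ * (1 : Matrix p p R).submatrix id e = 1 := by
  rw [conjTranspose_submatrix, conjTranspose_one,
    ← submatrix_mul _ _ _ _ _ Function.bijective_id, one_mul, submatrix_one_embedding]

theorem exists_sum_conjTranspose_mul_self_eq_one_iff {K : Type*} [Field K] [StarRing K]
    [Fintype ι] [Fintype m] [Fintype n] [DecidableEq m] :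
    (∃ A : ι → Matrix n m K, ∑ i, (A i)ᴴ * A i = 1) ↔
      Fintype.card m ≤ Fintype.card ι * Fintype.card n := by
  classical
  constructor
  · rintro ⟨A, hA⟩
    exact (card_le_finrank_range_mul_card_of_sum_eq_one hA).trans
      (Nat.mul_le_mul_right _ (finrank_range_le_card A))
  · intro h
    obtain ⟨e⟩ : Nonempty (m ↪ ι × n) :=
      Function.Embedding.nonempty_of_card_le (h.trans_eq (Fintype.card_prod ι n).symm)
    let V := (1 : Matrix (ι × n) (ι × n) K).submatrix id e
    have hV : Vᴴ * V = 1 := conjTranspose_mul_self_submatrix_one e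
    exact ⟨fun i ↦ V.submatrix (Prod.mk i) id,
      (sum_conjTranspose_mul_self_submatrix_prodMk V).trans hV⟩

/-- The matrix `K` whose columns are the vectorizations of the Kraus operators `A i`, through which
the Choi matrix of `krausMap A` factors as `K * Kᴴ`. Rows are indexed by pairs (column, row), the
convention of both `Matrix.vec` and `choi`. -/
def krausMatrix {R : Type*} (A : ι → Matrix n m R) : Matrix (m × n) ι R :=
  of fun jp i ↦ (A i).vec jp

theorem rank_krausMatrix {K : Type*} [Field K] [Fintype ι] (A : ι → Matrix n m K) :
    (krausMatrix A).rank = (Set.range A).finrank K := by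
  let vecEquiv : Matrix n m K ≃ₗ[K] (m × n → K) :=
    .ofBijective (IsLinearMap.mk' vec ⟨vec_add, vec_smul⟩) vec_bijective
  have hcol : Set.range (krausMatrix A).col = vecEquiv.toLinearMap '' Set.range A :=
    Set.range_comp vecEquiv A
  rw [rank_eq_finrank_span_cols, hcol, Submodule.span_image, LinearEquiv.finrank_map_eq,
    Set.finrank]

/-- The linear map `X ↦ ∑ i, A i * X * (A i)ᴴ` with Kraus operators `A i`. It is a quantum channel
when moreover `∑ i, (A i)ᴴ * A i = 1`. -/
def krausMap {R : Type*} [CommSemiring R] [Star R] [Fintype ι] [Fintype m]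
    (A : ι → Matrix n m R) : Matrix m m R →ₗ[R] Matrix n n R :=
  ∑ i, mulRightLinearMap n R (A i)ᴴ ∘ₗ mulLeftLinearMap m R (A i)

theorem krausMap_apply {R : Type*} [CommSemiring R] [Star R] [Fintype ι] [Fintype m]
    (A : ι → Matrix n m R) (X : Matrix m m R) : krausMap A X = ∑ i, A i * X * (A i)ᴴ := by
  simp [krausMap]

end KrausOperators

section Choi

variable {m n : ℕ}

theorem choi_krausMap {ι : Type*} [Fintype ι] (A : ι → Matrix (Fin n) (Fin m) ℂ) :
    choi m n (krausMap A) = krausMatrix A * (krausMatrix A)ᴴ := by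
  ext ⟨i, p⟩ ⟨j, q⟩
  simp [choi, krausMatrix, krausMap_apply, Matrix.sum_apply, mul_apply, single_apply, ite_and]

theorem rank_choi_krausMap {ι : Type*} [Fintype ι] (A : ι → Matrix (Fin n) (Fin m) ℂ) :
    (choi m n (krausMap A)).rank = (Set.range A).finrank ℂ := by
  rw [choi_krausMap, rank_self_mul_conjTranspose, rank_krausMatrix]

theorem isChannel_iff_exists_krausMap
    {L : Matrix (Fin m) (Fin m) ℂ →ₗ[ℂ] Matrix (Fin n) (Fin n) ℂ} :
    IsChannel m n L ↔ ∃ (k : ℕ) (A : Fin k → Matrix (Fin n) (Fin m) ℂ),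
      L = krausMap A ∧ ∑ i, (A i)ᴴ * A i = 1 := by
  simp only [IsChannel, LinearMap.ext_iff, krausMap_apply]

theorem IsChannel.le_rank_choi_mul {L : Matrix (Fin m) (Fin m) ℂ →ₗ[ℂ] Matrix (Fin n) (Fin n) ℂ}
    (hL : IsChannel m n L) : m ≤ (choi m n L).rank * n := by
  obtain ⟨k, A, rfl, hA⟩ := isChannel_iff_exists_krausMap.mp hL
  rw [rank_choi_krausMap]
  simpa only [Fintype.card_fin] using card_le_finrank_range_mul_card_of_sum_eq_one hA

theorem exists_isChannel_rank_choi_le_iff {k : ℕ} :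
    (∃ L : Matrix (Fin m) (Fin m) ℂ →ₗ[ℂ] Matrix (Fin n) (Fin n) ℂ,
      IsChannel m n L ∧ (choi m n L).rank ≤ k) ↔ m ≤ k * n := by
  constructor
  · rintro ⟨L, hL, hk⟩
    exact hL.le_rank_choi_mul.trans (Nat.mul_le_mul_right n hk)
  · intro h
    obtain ⟨A, hA⟩ : ∃ A : Fin k → Matrix (Fin n) (Fin m) ℂ, ∑ i, (A i)ᴴ * A i = 1 :=
      exists_sum_conjTranspose_mul_self_eq_one_iff.mpr (by simpa only [Fintype.card_fin] using h)
    refine ⟨krausMap A, isChannel_iff_exists_krausMap.mpr ⟨k, A, rfl, hA⟩, ?_⟩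
    simpa only [rank_choi_krausMap, Fintype.card_fin] using finrank_range_le_card (R := ℂ) A

end Choi

theorem le_mul_min_self_iff {m n k : ℕ} : m ≤ k * min m n ↔ m ≤ k * n := by
  rw [← Nat.mul_min_mul_left, le_min_iff, and_iff_right_iff_imp]
  rcases k.eq_zero_or_pos with rfl | hk
  · simp
  · exact fun _ ↦ Nat.le_mul_of_pos_left m hk

/-- there exist `A₁,…,A_k ∈ ℂ^{n×m}` with `∑ Aᵢ* Aᵢ = I_m` iff `k·min(m,n) ≥ m`;
consequently `L_{m,n,k}` is nonempty iff `k·min(m,n) ≥ m`. -/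
theorem stmt8 (m n k : ℕ) (hm : 0 < m) (hn : 0 < n) (hk : 0 < k) :
    ((∃ A : Fin k → Matrix (Fin n) (Fin m) ℂ, ∑ i, (A i)ᴴ * A i = 1) ↔
      m ≤ k * min m n) ∧
    ((∃ L : Matrix (Fin m) (Fin m) ℂ →ₗ[ℂ] Matrix (Fin n) (Fin n) ℂ,
        IsChannel m n L ∧ (choi m n L).rank ≤ k) ↔ m ≤ k * min m n) := by
  rw [le_mul_min_self_iff]
  refine ⟨?_, exists_isChannel_rank_choi_le_iff⟩
  simpa only [Fintype.card_fin] using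
    exists_sum_conjTranspose_mul_self_eq_one_iff (ι := Fin k) (m := Fin m) (n := Fin n) (K := ℂ)
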